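/- There is an absolute constant C such that for every locally Gabriel graph G = (P, E) on a set P of n points in convex position in the Euclidean plane (in particular, for every unit distance graph on such a set), there exist a partition P = U ∪ V, linear orders on U and on V, and a partition E = E₁ ∪ E₂ ∪ E₀ with E₁, E₂ ⊆ U × V and |E₀| ≤ C·n, such that the ordered bipartite graph (U, V, E₁) with the given orders and the ordered bipartite graph (U, V, E₂) with both orders reversed each satisfy the path restricted property (each is a PRBG). -/

import Mathlib

open List

/-- Adjacency relation of the bipartite graph with edge set `E ⊆ U × V`,
on the disjoint union of the two sides. -/
def BipAdj {α β : Type*} (E : Set (α × β)) : (α ⊕ β) → (α ⊕ β) → Prop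
  | Sum.inl u, Sum.inr v => (u, v) ∈ E
  | Sum.inr v, Sum.inl u => (u, v) ∈ E
  | _, _ => False

/-- The `U`-vertices visited by a walk, in order of traversal. -/
def uVerts {α β : Type*} (ws : List (α ⊕ β)) : List α := ws.filterMap Sum.getLeft?

/-- The `V`-vertices visited by a walk, in order of traversal. -/
def vVerts {α β : Type*} (ws : List (α ⊕ β)) : List β := ws.filterMap Sum.getRight?

/-- A (nonempty, simple) path in the bipartite graph with edge set `E`. -/
def IsPathList {α β : Type*} (E : Set (α × β)) (ws : List (α ⊕ β)) : Prop :=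
  ws ≠ [] ∧ ws.Chain' (BipAdj E) ∧ ws.Nodup

/-- A forward path: a path whose `U`-vertices and `V`-vertices are both visited in
strictly increasing order, or both in strictly decreasing order. -/
def IsForwardPath {α β : Type*} [Preorder α] [Preorder β]
    (E : Set (α × β)) (ws : List (α ⊕ β)) : Prop :=
  IsPathList E ws ∧
    (((uVerts ws).Chain' (· < ·) ∧ (vVerts ws).Chain' (· < ·)) ∨
      ((uVerts ws).Chain' (· > ·) ∧ (vVerts ws).Chain' (· > ·)))

/-- The internal (degree-two) vertices of a path: all but the two endpoints. -/
def internalVerts {α β : Type*} (ws : List (α ⊕ β)) : List (α ⊕ β) := (ws.drop 1).dropLast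

/-- `x` is a least element of the list `l`. -/
def ListLeast {γ : Type*} [Preorder γ] (l : List γ) (x : γ) : Prop :=
  x ∈ l ∧ ∀ y ∈ l, x ≤ y

/-- `x` is a greatest element of the list `l`. -/
def ListGreatest {γ : Type*} [Preorder γ] (l : List γ) (x : γ) : Prop :=
  x ∈ l ∧ ∀ y ∈ l, y ≤ x

/-- The forward path `ws` has a back edge: an edge of `G` joining the smallest
`U`-vertex `u_a` of `ws` to a vertex `v_j ∈ [v_c, v_d]` strictly greater than the smallest
internal `V`-vertex of `ws`, or an edge joining the smallest `V`-vertex `v_c` of `ws` to a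
vertex `u_i ∈ [u_a, u_b]` strictly greater than the smallest internal `U`-vertex of `ws`. -/
def HasBackEdge {α β : Type*} [Preorder α] [Preorder β]
    (E : Set (α × β)) (ws : List (α ⊕ β)) : Prop :=
  (∃ ua vc vd vint vj,
      ListLeast (uVerts ws) ua ∧ ListLeast (vVerts ws) vc ∧ ListGreatest (vVerts ws) vd ∧
      ListLeast (vVerts (internalVerts ws)) vint ∧
      (ua, vj) ∈ E ∧ vc ≤ vj ∧ vj ≤ vd ∧ vint < vj) ∨
  (∃ vc ua ub uint ui,
      ListLeast (vVerts ws) vc ∧ ListLeast (uVerts ws) ua ∧ ListGreatest (uVerts ws) ub ∧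
      ListLeast (uVerts (internalVerts ws)) uint ∧
      (ui, vc) ∈ E ∧ ua ≤ ui ∧ ui ≤ ub ∧ uint < ui)

/-- A path-restricted ordered bipartite graph: no forward path has a back edge. -/
def IsPRBG {α β : Type*} [Preorder α] [Preorder β] (E : Set (α × β)) : Prop :=
  ∀ ws : List (α ⊕ β), IsForwardPath E ws → ¬ HasBackEdge E ws

/-- A finite set of points in the plane is in convex position if every point of the set is an
extreme point of its convex hull. -/
def ConvexPosition (P : Set (EuclideanSpace ℝ (Fin 2))) : Prop :=
  ∀ p ∈ P, p ∈ (convexHull ℝ P).extremePoints ℝ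

/-- `F` is the edge set of a locally Gabriel graph on `P`.  (In particular the edge set of
any unit distance graph on `P` satisfies this.) -/
def IsLGG (P : Set (EuclideanSpace ℝ (Fin 2)))
    (F : Set (EuclideanSpace ℝ (Fin 2) × EuclideanSpace ℝ (Fin 2))) : Prop :=
  (∀ e ∈ F, e.1 ∈ P ∧ e.2 ∈ P ∧ e.1 ≠ e.2) ∧
  (∀ u v, (u, v) ∈ F → (v, u) ∈ F) ∧
  (∀ u v w, (u, v) ∈ F → (u, w) ∈ F → v ≠ w →
    EuclideanGeometry.angle u v w < Real.pi / 2 ∧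
      EuclideanGeometry.angle u w v < Real.pi / 2)

/-- The reverse of a preorder. -/
def revPreorder {γ : Type*} (i : Preorder γ) : Preorder γ where
  le a b := i.le b a
  lt a b := i.lt b a
  le_refl a := i.le_refl a
  le_trans _ _ _ h h' := i.le_trans _ _ _ h' h
  lt_iff_le_not_ge a b := i.lt_iff_le_not_ge b a

/-!
Let `cd` be a diameter of the point set `P`. In coordinates with `x`-axis along `cd`, all other
points of `P` lie strictly between `c` and `d`, so convex position splits `P` into a concave chain
`U` above the line `cd` and a convex chain `V` below it.

An edge `ab` inside a chain cannot be accompanied both by a longer edge `a'b` on the left and by a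
longer edge `ab'` on the right: the angles `a'ab` and `abb'` of a convex polygon would both be
acute. Hence `ab` is the last edge to the right of `a` or the first edge to the left of `b`, and
there are linearly many such edges. The same count applies to the pairs `(u, v)` at which the two
chains approach each other both to the left and to the right.

At every other pair the chains approach each other on exactly one side. If a forward path of edges
approaching on the left had a back edge, two acute angles at its first vertices `u` and `v` would
make the chords leaving them to the right approach each other; but the chains approach on the left
of the last edge of the path, so the chords from `u` and `v` to it diverge. Reflecting the `x`-axis,
the edges approaching on the right have the path restricted property for the reversed orders.
-/

section PathRestricted

variable {α β γ : Type*}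

@[simp] lemma uVerts_cons_inl (u : α) (ws : List (α ⊕ β)) :
    uVerts (Sum.inl u :: ws) = u :: uVerts ws := rfl

@[simp] lemma uVerts_cons_inr (v : β) (ws : List (α ⊕ β)) :
    uVerts (Sum.inr v :: ws) = uVerts ws := rfl

@[simp] lemma vVerts_cons_inl (u : α) (ws : List (α ⊕ β)) :
    vVerts (Sum.inl u :: ws) = vVerts ws := rfl

@[simp] lemma vVerts_cons_inr (v : β) (ws : List (α ⊕ β)) :
    vVerts (Sum.inr v :: ws) = v :: vVerts ws := rfl

lemma mem_uVerts {ws : List (α ⊕ β)} {u : α} : u ∈ uVerts ws ↔ Sum.inl u ∈ ws := by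
  simp [uVerts]

lemma mem_vVerts {ws : List (α ⊕ β)} {v : β} : v ∈ vVerts ws ↔ Sum.inr v ∈ ws := by
  simp [vVerts]

lemma uVerts_map_swap (ws : List (α ⊕ β)) : uVerts (ws.map Sum.swap) = vVerts ws := by
  rw [uVerts, vVerts, filterMap_map]
  congr 1
  ext (_ | _) <;> rfl

lemma vVerts_map_swap (ws : List (α ⊕ β)) : vVerts (ws.map Sum.swap) = uVerts ws := by
  rw [uVerts, vVerts, filterMap_map]
  congr 1
  ext (_ | _) <;> rfl

lemma uVerts_reverse (ws : List (α ⊕ β)) : uVerts ws.reverse = (uVerts ws).reverse :=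
  filterMap_reverse

lemma vVerts_reverse (ws : List (α ⊕ β)) : vVerts ws.reverse = (vVerts ws).reverse :=
  filterMap_reverse

lemma internalVerts_reverse (ws : List (α ⊕ β)) :
    internalVerts ws.reverse = (internalVerts ws).reverse := by
  simp [internalVerts, tail_reverse, dropLast_reverse, tail_dropLast]

lemma internalVerts_subset_tail (ws : List (α ⊕ β)) : internalVerts ws ⊆ ws.tail := by
  rw [internalVerts, drop_one]
  exact dropLast_subset _

lemma BipAdj.symm {E : Set (α × β)} : ∀ {a b : α ⊕ β}, BipAdj E a b → BipAdj E b a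
  | Sum.inl _, Sum.inr _, h => h
  | Sum.inr _, Sum.inl _, h => h

lemma BipAdj.swap {E : Set (α × β)} :
    ∀ {a b : α ⊕ β}, BipAdj E a b → BipAdj (Prod.swap ⁻¹' E) a.swap b.swap
  | Sum.inl _, Sum.inr _, h => h
  | Sum.inr _, Sum.inl _, h => h

lemma exists_rel_of_mem_of_isChain_cons {R : γ → γ → Prop} {a b : γ} {l : List γ}
    (h : (a :: l).IsChain R) (hb : b ∈ l) : ∃ c ∈ a :: l, R c b := by
  induction l generalizing a with
  | nil => simp at hb
  | cons a' l ih =>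
    rw [isChain_cons_cons] at h
    rcases mem_cons.1 hb with rfl | hb
    · exact ⟨a, mem_cons_self, h.1⟩
    · obtain ⟨c, hc, hcb⟩ := ih h.2 hb
      exact ⟨c, mem_cons_of_mem a hc, hcb⟩

variable [Preorder α] [Preorder β] [Preorder γ]

lemma ListLeast.eq_head {a b : γ} {l : List γ} (hb : ListLeast (a :: l) b)
    (h : (a :: l).Pairwise (· < ·)) : b = a := by
  rcases mem_cons.1 hb.1 with rfl | hbl
  · rfl
  · exact absurd (rel_of_pairwise_cons h hbl) (hb.2 a mem_cons_self).not_gt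

lemma listLeast_reverse {l : List γ} {a : γ} : ListLeast l.reverse a ↔ ListLeast l a := by
  simp [ListLeast]

lemma listGreatest_reverse {l : List γ} {a : γ} :
    ListGreatest l.reverse a ↔ ListGreatest l a := by
  simp [ListGreatest]

lemma hasBackEdge_reverse {E : Set (α × β)} {ws : List (α ⊕ β)} :
    HasBackEdge E ws.reverse ↔ HasBackEdge E ws := by
  simp only [HasBackEdge, internalVerts_reverse, uVerts_reverse, vVerts_reverse,
    listLeast_reverse, listGreatest_reverse]

/-- A hook of an ordered bipartite graph: a vertex `u` with neighbours `v < v'`, a second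
neighbour `u' > u` of `v`, and an edge `u''v''` weakly beyond both `u'` and `v'`. These four
edges are all that is kept of a forward path with a back edge. -/
def HasHook (E : Set (α × β)) : Prop :=
  ∃ u u' u'' v v' v'', (u, v) ∈ E ∧ (u', v) ∈ E ∧ (u, v') ∈ E ∧ (u'', v'') ∈ E ∧
    u < u' ∧ u' ≤ u'' ∧ v < v' ∧ v' ≤ v''

variable {E : Set (α × β)}

lemma HasHook.of_swap (h : HasHook (Prod.swap ⁻¹' E)) : HasHook E := by
  obtain ⟨v, v', v'', u, u', u'', huv, huv', hu'v, huv'', hv, hv', hu, hu'⟩ := h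
  exact ⟨u, u', u'', v, v', v'', huv, hu'v, huv', huv'', hu, hu', hv, hv'⟩

lemma hasHook_of_isChain_inl_cons {u : α} {v₀ v' v'' : β} {ws : List (α ⊕ β)}
    (hc : (Sum.inl u :: ws).IsChain (BipAdj E))
    (hu : (uVerts (Sum.inl u :: ws)).Pairwise (· < ·)) (hv : (vVerts ws).Pairwise (· < ·))
    (hv₀ : v₀ ∈ vVerts ws) (hv'' : v'' ∈ vVerts ws) (huv' : (u, v') ∈ E)
    (hlt : v₀ < v') (hle : v' ≤ v'') : HasHook E := by
  match ws, hc, hu, hv, hv₀, hv'' with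
  | [], _, _, _, hv₀, _ => simp [vVerts] at hv₀
  | Sum.inl _ :: _, hc, _, _, _, _ => simp [BipAdj] at hc
  | Sum.inr _ :: Sum.inr _ :: _, hc, _, _, _, _ => simp [BipAdj] at hc
  | [Sum.inr v], _, _, _, hv₀, hv'' =>
    obtain rfl : v₀ = v := by simpa [vVerts] using hv₀
    obtain rfl : v'' = v₀ := by simpa [vVerts] using hv''
    exact absurd hle hlt.not_ge
  | Sum.inr v :: Sum.inl u' :: l, hc, hu, hv, hv₀, hv'' =>
    simp only [isChain_cons_cons] at hc
    simp only [uVerts_cons_inl, uVerts_cons_inr, vVerts_cons_inl, vVerts_cons_inr,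
      pairwise_cons, mem_cons] at hu hv hv₀ hv''
    have hvv' : v < v' := by
      rcases hv₀ with rfl | hv₀
      exacts [hlt, (hv.1 v₀ hv₀).trans hlt]
    have hv''l : v'' ∈ vVerts l := hv''.resolve_left fun h => hvv'.not_ge (h ▸ hle)
    obtain ⟨u'' | w, hu'', hadj⟩ :=
      exists_rel_of_mem_of_isChain_cons hc.2.2 (mem_vVerts.1 hv''l)
    · refine ⟨u, u', u'', v, v', v'', hc.1, hc.2.1, huv', hadj, hu.1 u' (.inl rfl), ?_, hvv', hle⟩
      rcases mem_cons.1 hu'' with h | h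
      · exact (Sum.inl_injective h).ge
      · exact (hu.2.1 u'' (mem_uVerts.2 h)).le
    · exact hadj.elim

lemma hasHook_of_isChain {ws : List (α ⊕ β)} (hc : ws.IsChain (BipAdj E))
    (hu : (uVerts ws).Pairwise (· < ·)) (hv : (vVerts ws).Pairwise (· < ·))
    {u : α} {v₀ v' v'' : β} (hleast : ListLeast (uVerts ws) u) (hv₀ : v₀ ∈ vVerts ws.tail)
    (hv'' : v'' ∈ vVerts ws) (huv' : (u, v') ∈ E) (hlt : v₀ < v') (hle : v' ≤ v'') :
    HasHook E := by
  match ws, hc, hu, hv, hleast, hv₀, hv'' with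
  | [], _, _, _, _, _, hv'' => simp [vVerts] at hv''
  | [Sum.inr _], _, _, _, _, hv₀, _ => simp [vVerts] at hv₀
  | Sum.inr _ :: Sum.inr _ :: _, hc, _, _, _, _, _ => simp [BipAdj] at hc
  | Sum.inl _ :: l, hc, hu, hv, hleast, hv₀, hv'' =>
    obtain rfl := hleast.eq_head hu
    exact hasHook_of_isChain_inl_cons hc hu hv hv₀ hv'' huv' hlt hle
  | Sum.inr v :: Sum.inl _ :: l, hc, hu, hv, hleast, hv₀, hv'' =>
    obtain rfl := hleast.eq_head hu
    have hv''l : v'' ∈ vVerts l := by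
      rcases mem_cons.1 hv'' with rfl | h
      · exact absurd ((rel_of_pairwise_cons hv hv₀).trans hlt) hle.not_gt
      · exact h
    exact hasHook_of_isChain_inl_cons (isChain_cons_cons.1 hc).2 hu hv.of_cons hv₀ hv''l huv'
      hlt hle

lemma HasBackEdge.hasHook {ws : List (α ⊕ β)} (h : HasBackEdge E ws)
    (hc : ws.IsChain (BipAdj E)) (hu : (uVerts ws).Pairwise (· < ·))
    (hv : (vVerts ws).Pairwise (· < ·)) : HasHook E := by
  rcases h with ⟨ua, vc, vd, vint, vj, hua, -, hvd, hvint, hedge, -, hjd, hj⟩ |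
    ⟨vc, ua, ub, uint, ui, hvc, -, hub, huint, hedge, -, hib, hi⟩
  · exact hasHook_of_isChain hc hu hv hua
      (mem_vVerts.2 (internalVerts_subset_tail ws (mem_vVerts.1 hvint.1))) hvd.1 hedge hj hjd
  · refine HasHook.of_swap (hasHook_of_isChain (ws := ws.map Sum.swap)
      (isChain_map_of_isChain _ (fun _ _ => BipAdj.swap) hc) (by rwa [uVerts_map_swap])
      (by rwa [vVerts_map_swap]) (by rwa [uVerts_map_swap]) ?_
      (by rw [vVerts_map_swap]; exact hub.1) hedge hi hib)
    rw [← map_tail, vVerts_map_swap]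
    exact mem_uVerts.2 (internalVerts_subset_tail ws (mem_uVerts.1 huint.1))

theorem isPRBG_of_not_hasHook (hE : ¬ HasHook E) : IsPRBG E := by
  rintro ws ⟨⟨-, hc, -⟩, ⟨hu, hv⟩ | ⟨hu, hv⟩⟩ hback
  · exact hE (hback.hasHook hc (isChain_iff_pairwise.1 hu) (isChain_iff_pairwise.1 hv))
  · refine hE ((hasBackEdge_reverse.2 hback).hasHook
      (isChain_reverse.2 (hc.imp fun _ _ => BipAdj.symm)) ?_ ?_)
    · rw [uVerts_reverse, pairwise_reverse]
      exact isChain_iff_pairwise.1 hu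
    · rw [vVerts_reverse, pairwise_reverse]
      exact isChain_iff_pairwise.1 hv

end PathRestricted

section Counting

variable {α β κ μ : Type*} [LinearOrder κ] [LinearOrder μ]

-- Every edge is the last one at its left end or the first one at its right end.
lemma ncard_le_ncard_add_ncard_of_not_lt {U : Set α} {V : Set β} {S : Set (α × β)}
    {f : α → κ} {g : β → μ} (hUfin : U.Finite) (hVfin : V.Finite) (hS : S ⊆ U ×ˢ V)
    (hf : Set.InjOn f U) (hg : Set.InjOn g V)
    (h : ∀ a a' b b', (a, b) ∈ S → (a', b) ∈ S → (a, b') ∈ S → f a' < f a → ¬ g b < g b') :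
    S.ncard ≤ U.ncard + V.ncard := by
  let lastEdges := {e ∈ S | ∀ b, (e.1, b) ∈ S → g b ≤ g e.2}
  let firstEdges := {e ∈ S | ∀ a, (a, e.2) ∈ S → f e.1 ≤ f a}
  have hcover : S ⊆ lastEdges ∪ firstEdges := by
    rintro ⟨a, b⟩ hab
    by_contra hcon
    simp only [lastEdges, firstEdges, Set.mem_union, Set.mem_ofPred_eq, hab, true_and, not_or,
      not_forall, not_le] at hcon
    obtain ⟨⟨b', hab', hlt⟩, a', ha'b, hlt'⟩ := hcon
    exact h a a' b b' hab ha'b hab' hlt' hlt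
  have hlast : lastEdges.ncard ≤ U.ncard := by
    refine Set.ncard_le_ncard_of_injOn Prod.fst (fun e he => (hS he.1).1) ?_ hUfin
    rintro ⟨a, b⟩ hb ⟨_, b'⟩ hb' rfl
    exact Prod.ext rfl (hg (hS hb.1).2 (hS hb'.1).2 ((hb'.2 b hb.1).antisymm (hb.2 b' hb'.1)))
  have hfirst : firstEdges.ncard ≤ V.ncard := by
    refine Set.ncard_le_ncard_of_injOn Prod.snd (fun e he => (hS he.1).2) ?_ hVfin
    rintro ⟨a, b⟩ ha ⟨a', _⟩ ha' rfl
    exact Prod.ext (hf (hS ha.1).1 (hS ha'.1).1 ((ha.2 a' ha'.1).antisymm (ha'.2 a ha.1))) rfl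
  have hfin : (lastEdges ∪ firstEdges).Finite :=
    (hUfin.prod hVfin).subset (Set.union_subset (fun _ he => hS he.1) fun _ he => hS he.1)
  calc S.ncard ≤ (lastEdges ∪ firstEdges).ncard := Set.ncard_le_ncard hcover hfin
    _ ≤ lastEdges.ncard + firstEdges.ncard := Set.ncard_union_le _ _
    _ ≤ U.ncard + V.ncard := add_le_add hlast hfirst

end Counting

section Chains

variable {γ : Type*} (x y : γ → ℝ)

/-- The slope of the chord `ab` in the coordinates `x`, `y`; it is `0` when `x a = x b`. -/
noncomputable def chordSlope (a b : γ) : ℝ := (y b - y a) / (x b - x a)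

/-- The inner product of the vectors `b → a` and `b → c` in the coordinates `x`, `y`. Its
positivity says that the angle `abc` is acute. -/
def dotAt (a b c : γ) : ℝ := (x a - x b) * (x c - x b) + (y a - y b) * (y c - y b)

/-- `U` is the graph of a strictly concave function in the coordinates `x`, `y`. Convex chains
are the concave ones for `x`, `-y`. -/
structure IsConcaveChain (U : Set γ) : Prop where
  injOn : Set.InjOn x U
  chordSlope_lt : ∀ p ∈ U, ∀ q ∈ U, ∀ r ∈ U, x p < x q → x q < x r →
    chordSlope x y q r < chordSlope x y p q

/-- A concave chain `U` lying above a convex chain `V`. -/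
structure IsChainPair (U V : Set γ) : Prop where
  upper : IsConcaveChain x y U
  lower : IsConcaveChain x (-y) V
  lt : ∀ u ∈ U, ∀ v ∈ V, y v < y u

/-- The chains `U` and `V` approach each other to the right of `u` and `v`: all chords of `U`
leaving `u` to the right have a smaller slope than those of `V` leaving `v` to the right. -/
def RightConvergent (U V : Set γ) (u v : γ) : Prop :=
  ∀ u₁ ∈ U, ∀ v₁ ∈ V, x u < x u₁ → x v < x v₁ → chordSlope x y u u₁ < chordSlope x y v v₁

/-- The chains `U` and `V` approach each other to the left of `u` and `v`, the mirror image of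
`RightConvergent`. -/
def LeftConvergent (U V : Set γ) (u v : γ) : Prop :=
  ∀ u₁ ∈ U, ∀ v₁ ∈ V, x u₁ < x u → x v₁ < x v → chordSlope x y v₁ v < chordSlope x y u₁ u

/-- A symmetric edge set in which any two edges `ab`, `ac` at a common vertex `a` see an acute
angle at `b`: the local Gabriel condition in the coordinates `x`, `y`. -/
structure IsAcuteGraph (F : Set (γ × γ)) : Prop where
  symm : ∀ a b, (a, b) ∈ F → (b, a) ∈ F
  dotAt_pos : ∀ a b c, (a, b) ∈ F → (a, c) ∈ F → b ≠ c → 0 < dotAt x y a b c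

variable {x y} {U V : Set γ}

lemma chordSlope_comm (a b : γ) : chordSlope x y a b = chordSlope x y b a := by
  rw [chordSlope, chordSlope, ← neg_sub (y a), ← neg_sub (x a), neg_div_neg_eq]

lemma chordSlope_neg_fst (a b : γ) : chordSlope (-x) y a b = -chordSlope x y a b := by
  rw [chordSlope, chordSlope, ← div_neg, Pi.neg_apply, Pi.neg_apply, neg_sub_neg, neg_sub]

lemma chordSlope_neg_snd (a b : γ) : chordSlope x (-y) a b = -chordSlope x y a b := by
  rw [chordSlope, chordSlope, ← neg_div, Pi.neg_apply, Pi.neg_apply, neg_sub_neg, neg_sub]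

lemma sub_eq_chordSlope_mul {a b : γ} (h : x a ≠ x b) :
    y b - y a = chordSlope x y a b * (x b - x a) :=
  (div_mul_cancel₀ _ (sub_ne_zero.2 h.symm)).symm

lemma dotAt_comm (a b c : γ) : dotAt x y a b c = dotAt x y c b a := by
  simp only [dotAt, mul_comm]

lemma dotAt_neg_fst (a b c : γ) : dotAt (-x) y a b c = dotAt x y a b c := by
  simp only [dotAt, Pi.neg_apply]; ring

lemma dotAt_neg_snd (a b c : γ) : dotAt x (-y) a b c = dotAt x y a b c := by
  simp only [dotAt, Pi.neg_apply]; ring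

lemma dotAt_eq_mul_chordSlope {a b c : γ} (h : x b ≠ x c) :
    dotAt x y a b c = ((x a - x b) + (y a - y b) * chordSlope x y b c) * (x c - x b) := by
  rw [dotAt, sub_eq_chordSlope_mul (y := y) h]; ring

lemma pos_of_dotAt_pos {a b c : γ} (h : x b < x c) (hd : 0 < dotAt x y a b c) :
    0 < (x a - x b) + (y a - y b) * chordSlope x y b c := by
  rw [dotAt_eq_mul_chordSlope h.ne] at hd
  exact pos_of_mul_pos_left hd (sub_pos.2 h).le

lemma chordSlope_mul_lt_neg_one {a b c : γ} (hab : x a < x b) (hbc : x b < x c)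
    (hd : 0 < dotAt x y a b c) : chordSlope x y a b * chordSlope x y b c < -1 := by
  have h := pos_of_dotAt_pos hbc hd
  rw [← neg_sub (y b), sub_eq_chordSlope_mul hab.ne] at h
  have h' : 0 < (x b - x a) * (-1 - chordSlope x y a b * chordSlope x y b c) := by linarith
  linarith [pos_of_mul_pos_right h' (sub_pos.2 hab).le]

lemma chordSlope_lt_of_dotAt_pos {u u' v v' : γ} (hy : y v < y u) (hu : x u < x u')
    (hv : x v < x v') (hd : 0 < dotAt x y v u u') (hd' : 0 < dotAt x y u v v') :
    chordSlope x y u u' < chordSlope x y v v' := by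
  have h := pos_of_dotAt_pos hu hd
  have h' := pos_of_dotAt_pos hv hd'
  have : 0 < (y u - y v) * (chordSlope x y v v' - chordSlope x y u u') := by linarith
  exact sub_pos.1 (pos_of_mul_pos_right this (sub_pos.2 hy).le)

lemma chordSlope_lt_of_chord_lt {p q r : γ} (hpq : x p < x q) (hqr : x q < x r)
    (h : y p + chordSlope x y p r * (x q - x p) < y q) :
    chordSlope x y q r < chordSlope x y p q := by
  rw [chordSlope, div_mul_eq_mul_div, ← lt_sub_iff_add_lt',
    div_lt_iff₀ (sub_pos.2 (hpq.trans hqr))] at h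
  rw [chordSlope, chordSlope, div_lt_div_iff₀ (sub_pos.2 hqr) (sub_pos.2 hpq)]
  linarith

namespace IsConcaveChain

lemma mono (hV : IsConcaveChain x y V) (h : U ⊆ V) : IsConcaveChain x y U where
  injOn := hV.injOn.mono h
  chordSlope_lt p hp q hq r hr := hV.chordSlope_lt p (h hp) q (h hq) r (h hr)

lemma neg_fst (hU : IsConcaveChain x y U) : IsConcaveChain (-x) y U where
  injOn _ hp _ hq h := hU.injOn hp hq (neg_injective h)
  chordSlope_lt p hp q hq r hr hpq hqr := by
    rw [chordSlope_neg_fst, chordSlope_neg_fst, chordSlope_comm p, chordSlope_comm q]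
    exact neg_lt_neg (hU.chordSlope_lt r hr q hq p hp (neg_lt_neg_iff.1 hqr)
      (neg_lt_neg_iff.1 hpq))

lemma chordSlope_le (hU : IsConcaveChain x y U) {p q r : γ} (hp : p ∈ U) (hq : q ∈ U)
    (hr : r ∈ U) (hpq : x p < x q) (hqr : x q ≤ x r) :
    chordSlope x y p r ≤ chordSlope x y p q := by
  rcases hqr.lt_or_eq with hqr | hqr
  · have h := hU.chordSlope_lt p hp q hq r hr hpq hqr
    rw [chordSlope, chordSlope, div_lt_div_iff₀ (sub_pos.2 hqr) (sub_pos.2 hpq)] at h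
    rw [chordSlope, chordSlope, div_le_div_iff₀ (sub_pos.2 (hpq.trans hqr)) (sub_pos.2 hpq)]
    linarith
  · rw [hU.injOn hq hr hqr]

-- The angles at `a` and `b` of the convex polygon `a'abb'` add up to more than `π`.
lemma not_acute (hU : IsConcaveChain x y U) {a' a b b' : γ} (ha' : a' ∈ U) (ha : a ∈ U)
    (hb : b ∈ U) (hb' : b' ∈ U) (haa : x a' < x a) (hab : x a < x b) (hbb : x b < x b')
    (hda : 0 < dotAt x y a' a b) (hdb : 0 < dotAt x y a b b') : False := by
  have hla := chordSlope_mul_lt_neg_one haa hab hda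
  have hlb := chordSlope_mul_lt_neg_one hab hbb hdb
  have hca := hU.chordSlope_lt a' ha' a ha b hb haa hab
  have hcb := hU.chordSlope_lt a ha b hb b' hb' hab hbb
  rcases le_total 0 (chordSlope x y a b) with h | h <;> nlinarith

end IsConcaveChain

lemma isConcaveChain_of_subsingleton (hU : U.Subsingleton) : IsConcaveChain x y U where
  injOn := hU.injOn x
  chordSlope_lt _ hp _ hq _ _ hpq := absurd (congrArg x (hU hp hq)) hpq.ne

lemma IsChainPair.neg_fst (h : IsChainPair x y U V) : IsChainPair (-x) y U V :=
  ⟨h.upper.neg_fst, h.lower.neg_fst, h.lt⟩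

lemma RightConvergent.leftConvergent_neg_fst {u v : γ} (h : RightConvergent x y U V u v) :
    LeftConvergent (-x) y U V u v := by
  intro u' hu' v' hv' hu hv
  rw [chordSlope_neg_fst, chordSlope_neg_fst, chordSlope_comm u', chordSlope_comm v']
  exact neg_lt_neg (h u' hu' v' hv' (neg_lt_neg_iff.1 hu) (neg_lt_neg_iff.1 hv))

-- To the right of `u`, `v` the slopes of `U` decrease and those of `V` increase, so a pair of
-- chords violating convergence there forces all pairs of chords on the left to converge.
lemma IsChainPair.leftConvergent_or_rightConvergent (h : IsChainPair x y U V) {u v : γ}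
    (hu : u ∈ U) (hv : v ∈ V) : LeftConvergent x y U V u v ∨ RightConvergent x y U V u v := by
  refine or_iff_not_imp_right.2 fun hright u₁ hu₁ v₁ hv₁ hxu₁ hxv₁ => ?_
  simp only [RightConvergent, not_forall, not_lt] at hright
  obtain ⟨u₂, hu₂, v₂, hv₂, hxu₂, hxv₂, hle⟩ := hright
  have hupper := h.upper.chordSlope_lt u₁ hu₁ u hu u₂ hu₂ hxu₁ hxu₂
  have hlower := h.lower.chordSlope_lt v₁ hv₁ v hv v₂ hv₂ hxv₁ hxv₂
  rw [chordSlope_neg_snd, chordSlope_neg_snd, neg_lt_neg_iff] at hlower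
  calc chordSlope x y v₁ v < chordSlope x y v v₂ := hlower
    _ ≤ chordSlope x y u u₂ := hle
    _ < chordSlope x y u₁ u := hupper

lemma IsChainPair.not_acute_of_leftConvergent (h : IsChainPair x y U V) {u u' u'' v v' v'' : γ}
    (hleft : LeftConvergent x y U V u'' v'') (hu : u ∈ U) (hu' : u' ∈ U) (hu'' : u'' ∈ U)
    (hv : v ∈ V) (hv' : v' ∈ V) (hv'' : v'' ∈ V) (huu' : x u < x u') (hu'u'' : x u' ≤ x u'')
    (hvv' : x v < x v') (hv'v'' : x v' ≤ x v'') (hdu : 0 < dotAt x y v u u')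
    (hdv : 0 < dotAt x y u v v') : False := by
  have hlower := h.lower.chordSlope_le hv hv' hv'' hvv' hv'v''
  rw [chordSlope_neg_snd, chordSlope_neg_snd, neg_le_neg_iff] at hlower
  refine lt_irrefl (chordSlope x y u u') ?_
  calc chordSlope x y u u' < chordSlope x y v v' :=
        chordSlope_lt_of_dotAt_pos (h.lt u hu v hv) huu' hvv' hdu hdv
    _ ≤ chordSlope x y v v'' := hlower
    _ < chordSlope x y u u'' := hleft u hu v hv (huu'.trans_le hu'u'') (hvv'.trans_le hv'v'')
    _ ≤ chordSlope x y u u' := h.upper.chordSlope_le hu hu' hu'' huu' hu'u''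

end Chains

section Decomposition

variable {γ : Type*} {x y : γ → ℝ} {F : Set (γ × γ)}

lemma IsAcuteGraph.neg_fst (hF : IsAcuteGraph x y F) : IsAcuteGraph (-x) y F where
  symm := hF.symm
  dotAt_pos a b c hab hac hbc := by
    rw [dotAt_neg_fst]
    exact hF.dotAt_pos a b c hab hac hbc

lemma IsAcuteGraph.neg_snd (hF : IsAcuteGraph x y F) : IsAcuteGraph x (-y) F where
  symm := hF.symm
  dotAt_pos a b c hab hac hbc := by
    rw [dotAt_neg_snd]
    exact hF.dotAt_pos a b c hab hac hbc

/-- The order of the points of a chain `U` from left to right, that is, by the coordinate `x`. -/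
noncomputable abbrev IsConcaveChain.leftToRight {U : Finset γ}
    (hU : IsConcaveChain x y (U : Set γ)) : LinearOrder U :=
  LinearOrder.lift' (fun u : U => x u) hU.injOn.injective

theorem isPRBG_of_leftConvergent {U V : Finset γ} [Preorder U] [Preorder V]
    (h : IsChainPair x y (U : Set γ) V) (hF : IsAcuteGraph x y F)
    (hxU : Monotone fun u : U => x u) (hxV : Monotone fun v : V => x v) {E : Set (U × V)}
    (hE : ∀ e ∈ E, (e.1.1, e.2.1) ∈ F ∧ LeftConvergent x y U V e.1 e.2) : IsPRBG E := by
  have hstrictU : StrictMono fun u : U => x u := hxU.strictMono_of_injective h.upper.injOn.injective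
  have hstrictV : StrictMono fun v : V => x v := hxV.strictMono_of_injective h.lower.injOn.injective
  refine isPRBG_of_not_hasHook ?_
  rintro ⟨u, u', u'', v, v', v'', huv, hu'v, huv', hu''v'', hu, hu', hv, hv'⟩
  refine h.not_acute_of_leftConvergent (hE _ hu''v'').2 u.2 u'.2 u''.2 v.2 v'.2 v''.2
    (hstrictU hu) (hxU hu') (hstrictV hv) (hxV hv') ?_ ?_
  · exact hF.dotAt_pos _ _ _ (hF.symm _ _ (hE _ huv).1) (hF.symm _ _ (hE _ hu'v).1)
      (ne_of_apply_ne x (hstrictU hu).ne)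
  · exact hF.dotAt_pos _ _ _ (hE _ huv).1 (hE _ huv').1 (ne_of_apply_ne x (hstrictV hv).ne)

variable (x y F)

/-- The edges inside the chain `U`, directed from left to right. -/
def chainEdges (U : Set γ) : Set (γ × γ) := {e ∈ F | e ∈ U ×ˢ U ∧ x e.1 < x e.2}

/-- The pairs at which the chains `U` and `V` converge on both sides. -/
def biconvergentPairs (U V : Set γ) : Set (γ × γ) :=
  {e ∈ U ×ˢ V | LeftConvergent x y U V e.1 e.2 ∧ RightConvergent x y U V e.1 e.2}

/-- The edges between `U` and `V` at which the chains converge only on the left. -/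
def leftEdges (U V : Finset γ) : Set (U × V) :=
  {e | (e.1.1, e.2.1) ∈ F ∧ LeftConvergent x y U V e.1 e.2 ∧ ¬ RightConvergent x y U V e.1 e.2}

/-- The edges between `U` and `V` at which the chains converge only on the right. -/
def rightEdges (U V : Finset γ) : Set (U × V) :=
  {e | (e.1.1, e.2.1) ∈ F ∧ RightConvergent x y U V e.1 e.2 ∧ ¬ LeftConvergent x y U V e.1 e.2}

/-- The linearly many edges left out of the two path restricted graphs. -/
def residualEdges (U V : Set γ) : Set (γ × γ) :=
  chainEdges x F U ∪ chainEdges x F V ∪ F ∩ biconvergentPairs x y U V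

variable {x y F}

lemma residualEdges_subset (U V : Set γ) : residualEdges x y F U V ⊆ F :=
  Set.union_subset (Set.union_subset (Set.sep_subset _ _) (Set.sep_subset _ _))
    Set.inter_subset_left

lemma IsConcaveChain.ncard_chainEdges_le {U : Set γ} (hU : IsConcaveChain x y U)
    (hF : IsAcuteGraph x y F) (hUfin : U.Finite) : (chainEdges x F U).ncard ≤ 2 * U.ncard := by
  rw [two_mul]
  refine ncard_le_ncard_add_ncard_of_not_lt hUfin hUfin (fun e he => he.2.1) hU.injOn hU.injOn ?_
  rintro a a' b b' ⟨hab, ⟨ha, hb⟩, hlt⟩ ⟨ha'b, ⟨ha', -⟩, -⟩ ⟨hab', ⟨-, hb'⟩, -⟩ ha'a hbb'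
  refine hU.not_acute ha' ha hb hb' ha'a hlt hbb' ?_ ?_
  · rw [dotAt_comm]
    exact hF.dotAt_pos b a a' (hF.symm _ _ hab) (hF.symm _ _ ha'b) (ne_of_apply_ne x ha'a.ne')
  · exact hF.dotAt_pos a b b' hab hab' (ne_of_apply_ne x hbb'.ne)

lemma ncard_biconvergentPairs_le {U V : Set γ} (hU : Set.InjOn x U) (hV : Set.InjOn x V)
    (hUfin : U.Finite) (hVfin : V.Finite) :
    (biconvergentPairs x y U V).ncard ≤ U.ncard + V.ncard := by
  refine ncard_le_ncard_add_ncard_of_not_lt hUfin hVfin (Set.sep_subset _ _) hU hV ?_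
  rintro a a' b b' ⟨⟨ha, hb⟩, -⟩ ⟨⟨ha', -⟩, -, hright⟩ ⟨⟨-, hb'⟩, hleft, -⟩ ha'a hbb'
  exact lt_asymm (hright a ha b' hb' ha'a hbb') (hleft a' ha' b hb ha'a hbb')

namespace IsChainPair

theorem isPRBG_leftEdges {U V : Finset γ} (h : IsChainPair x y (U : Set γ) V)
    (hF : IsAcuteGraph x y F) :
    @IsPRBG U V h.upper.leftToRight.toPreorder h.lower.leftToRight.toPreorder
      (leftEdges x y F U V) := by
  let := h.upper.leftToRight
  let := h.lower.leftToRight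
  exact isPRBG_of_leftConvergent h hF (fun _ _ hle => hle) (fun _ _ hle => hle)
    fun _ he => ⟨he.1, he.2.1⟩

theorem isPRBG_rightEdges {U V : Finset γ} (h : IsChainPair x y (U : Set γ) V)
    (hF : IsAcuteGraph x y F) :
    @IsPRBG U V (revPreorder h.upper.leftToRight.toPreorder)
      (revPreorder h.lower.leftToRight.toPreorder) (rightEdges x y F U V) := by
  let := revPreorder h.upper.leftToRight.toPreorder
  let := revPreorder h.lower.leftToRight.toPreorder
  exact isPRBG_of_leftConvergent h.neg_fst hF.neg_fst (fun _ _ hle => neg_le_neg hle)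
    (fun _ _ hle => neg_le_neg hle) fun _ he => ⟨he.1, he.2.1.leftConvergent_neg_fst⟩

lemma ncard_residualEdges_le {U V : Set γ} (h : IsChainPair x y U V) (hF : IsAcuteGraph x y F)
    (hUfin : U.Finite) (hVfin : V.Finite) :
    (residualEdges x y F U V).ncard ≤ 3 * (U.ncard + V.ncard) := by
  have hU := h.upper.ncard_chainEdges_le hF hUfin
  have hV := h.lower.ncard_chainEdges_le hF.neg_snd hVfin
  have hUV := ncard_biconvergentPairs_le (y := y) h.upper.injOn h.lower.injOn hUfin hVfin
  have hfin : (biconvergentPairs x y U V).Finite :=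
    (hUfin.prod hVfin).subset (Set.sep_subset _ _)
  calc (residualEdges x y F U V).ncard
      ≤ (chainEdges x F U ∪ chainEdges x F V).ncard + (F ∩ biconvergentPairs x y U V).ncard :=
        Set.ncard_union_le _ _
    _ ≤ (chainEdges x F U).ncard + (chainEdges x F V).ncard + (biconvergentPairs x y U V).ncard :=
        add_le_add (Set.ncard_union_le _ _) (Set.ncard_le_ncard Set.inter_subset_right hfin)
    _ ≤ 3 * (U.ncard + V.ncard) := by omega

lemma mem_residualEdges_or_exists {U V : Finset γ} (h : IsChainPair x y (U : Set γ) V) {u v : γ}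
    (hu : u ∈ U) (hv : v ∈ V) (huv : (u, v) ∈ F) :
    (u, v) ∈ residualEdges x y F U V ∨
      ∃ e : U × V, (e ∈ leftEdges x y F U V ∨ e ∈ rightEdges x y F U V) ∧
        e.1.1 = u ∧ e.2.1 = v := by
  have hconv := h.leftConvergent_or_rightConvergent hu hv
  by_cases hleft : LeftConvergent x y U V u v
  · by_cases hright : RightConvergent x y U V u v
    · exact .inl (.inr ⟨huv, ⟨hu, hv⟩, hleft, hright⟩)
    · exact .inr ⟨(⟨u, hu⟩, ⟨v, hv⟩), .inl ⟨huv, hleft, hright⟩, rfl, rfl⟩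
  · exact .inr ⟨(⟨u, hu⟩, ⟨v, hv⟩), .inr ⟨huv, hconv.resolve_left hleft, hleft⟩, rfl, rfl⟩

end IsChainPair

lemma mem_residualEdges_or_swap_mem {U V C : Set γ} (hC : C = U ∨ C = V) (hx : Set.InjOn x C)
    (hF : IsAcuteGraph x y F) {a b : γ} (ha : a ∈ C) (hb : b ∈ C) (hab : (a, b) ∈ F)
    (hne : a ≠ b) : (a, b) ∈ residualEdges x y F U V ∨ (b, a) ∈ residualEdges x y F U V := by
  have hsub : chainEdges x F C ⊆ residualEdges x y F U V := by
    rcases hC with rfl | rfl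
    exacts [fun _ he => .inl (.inl he), fun _ he => .inl (.inr he)]
  rcases lt_or_gt_of_ne (hx.ne ha hb hne) with hlt | hgt
  · exact .inl (hsub ⟨hab, ⟨ha, hb⟩, hlt⟩)
  · exact .inr (hsub ⟨hF.symm a b hab, ⟨hb, ha⟩, hgt⟩)

lemma IsChainPair.edge_cover {U V : Finset γ} (h : IsChainPair x y (U : Set γ) V)
    (hF : IsAcuteGraph x y F) {a b : γ} (ha : a ∈ (U ∪ V : Set γ)) (hb : b ∈ (U ∪ V : Set γ))
    (hab : (a, b) ∈ F) (hne : a ≠ b) :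
    (a, b) ∈ residualEdges x y F U V ∨ (b, a) ∈ residualEdges x y F U V ∨
      ∃ e : U × V, (e ∈ leftEdges x y F U V ∨ e ∈ rightEdges x y F U V) ∧
        ((e.1.1 = a ∧ e.2.1 = b) ∨ (e.1.1 = b ∧ e.2.1 = a)) := by
  rcases ha with ha | ha <;> rcases hb with hb | hb
  · rw [← or_assoc]
    exact .inl (mem_residualEdges_or_swap_mem (.inl rfl) h.upper.injOn hF ha hb hab hne)
  · rcases h.mem_residualEdges_or_exists ha hb hab with hres | ⟨e, he, heq⟩
    exacts [.inl hres, .inr (.inr ⟨e, he, .inl heq⟩)]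
  · rcases h.mem_residualEdges_or_exists hb ha (hF.symm a b hab) with hres | ⟨e, he, heq⟩
    exacts [.inr (.inl hres), .inr (.inr ⟨e, he, .inr heq⟩)]
  · rw [← or_assoc]
    exact .inl (mem_residualEdges_or_swap_mem (.inr rfl) h.lower.injOn hF ha hb hab hne)

end Decomposition

section ConvexPosition

variable {E : Type*} [AddCommGroup E] [Module ℝ E] {x y : E →ₗ[ℝ] ℝ}

lemma exists_mem_chord {K : Set E} (hK : Convex ℝ K) {p q r : E} (hp : p ∈ K) (hr : r ∈ K)
    (hpq : x p < x q) (hqr : x q < x r) :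
    ∃ s ∈ K, x s = x q ∧ y s = y p + chordSlope x y p r * (x q - x p) := by
  have hpr : 0 < x r - x p := sub_pos.2 (hpq.trans hqr)
  refine ⟨AffineMap.lineMap p r ((x q - x p) / (x r - x p)), hK.lineMap_mem hp hr
    ⟨div_nonneg (sub_pos.2 hpq).le hpr.le, (div_le_one hpr).2 (by linarith)⟩, ?_, ?_⟩
  · rw [AffineMap.lineMap_apply_module', map_add, map_smul, map_sub, smul_eq_mul,
      div_mul_cancel₀ _ hpr.ne', sub_add_cancel]
  · rw [AffineMap.lineMap_apply_module', map_add, map_smul, map_sub, smul_eq_mul, chordSlope]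
    ring

lemma lt_of_convex_of_notMem (hxy : Function.Injective (x.prod y)) {K : Set E}
    (hK : Convex ℝ K) {q s t : E} (hq : q ∉ K) (hs : s ∈ K) (ht : t ∈ K) (hxs : x s = x q)
    (hxt : x t = x q) (hyt : y t ≤ y q) : y s < y q := by
  by_contra! hys
  obtain ⟨a, b, ha, hb, hab, hq_eq⟩ := Icc_subset_segment (𝕜 := ℝ) ⟨hyt, hys⟩
  have hcomb : a • t + b • s = q := by
    refine hxy (Prod.ext (?_ : x (a • t + b • s) = x q) (?_ : y (a • t + b • s) = y q))
    · rw [map_add, map_smul, map_smul, hxs, hxt, ← add_smul, hab, one_smul]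
    · rw [map_add, map_smul, map_smul, hq_eq]
  exact hq (hcomb ▸ hK ht hs ha hb hab)

variable {P : Set E} {c d : E}

lemma lt_of_mem_convexHull_sdiff (hxy : Function.Injective (x.prod y))
    (hP : ConvexIndependent ℝ ((↑) : P → E)) (hc : c ∈ P) (hd : d ∈ P) (hcd : y c = y d)
    (hxc : ∀ p ∈ P, p ≠ c → x c < x p) (hxd : ∀ p ∈ P, p ≠ d → x p < x d) {q s : E} (hq : q ∈ P)
    (hqc : q ≠ c) (hqd : q ≠ d) (hyq : y c ≤ y q) (hs : s ∈ convexHull ℝ (P \ {q}))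
    (hxs : x s = x q) : y s < y q := by
  obtain ⟨t, ht, hxt, hyt⟩ := exists_mem_chord (y := y) (convex_convexHull ℝ (P \ {q}))
    (subset_convexHull ℝ _ ⟨hc, hqc.symm⟩) (subset_convexHull ℝ _ ⟨hd, hqd.symm⟩)
    (hxc q hq hqc) (hxd q hq hqd)
  rw [chordSlope, hcd, sub_self, zero_div, zero_mul, add_zero, ← hcd] at hyt
  exact lt_of_convex_of_notMem hxy (convex_convexHull ℝ _)
    (convexIndependent_set_iff_notMem_convexHull_sdiff.1 hP q hq) hs ht hxs hxt (hyt.trans_le hyq)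

lemma isConcaveChain_of_convexIndependent (hxy : Function.Injective (x.prod y))
    (hP : ConvexIndependent ℝ ((↑) : P → E)) (hc : c ∈ P) (hd : d ∈ P) (hcd : y c = y d)
    (hxc : ∀ p ∈ P, p ≠ c → x c < x p) (hxd : ∀ p ∈ P, p ≠ d → x p < x d) :
    IsConcaveChain x y {p ∈ P | y c ≤ y p} where
  injOn := by
    have not_above : ∀ p ∈ P, ∀ q ∈ P, y c ≤ y q → p ≠ q → x p = x q → y p < y q := by
      intro p hp q hq hyq hpq hx
      refine lt_of_mem_convexHull_sdiff hxy hP hc hd hcd hxc hxd hq ?_ ?_ hyq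
        (subset_convexHull ℝ _ ⟨hp, hpq⟩) hx
      · rintro rfl
        exact (hxc p hp hpq).ne' hx
      · rintro rfl
        exact (hxd p hp hpq).ne hx
    intro p hp q hq hx
    by_contra hpq
    exact lt_asymm (not_above p hp.1 q hq.1 hq.2 hpq hx)
      (not_above q hq.1 p hp.1 hp.2 (Ne.symm hpq) hx.symm)
  chordSlope_lt p hp q hq r hr hpq hqr := by
    obtain ⟨s, hs, hxs, hys⟩ := exists_mem_chord (y := y) (convex_convexHull ℝ (P \ {q}))
      (subset_convexHull ℝ _ ⟨hp.1, ne_of_apply_ne x hpq.ne⟩)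
      (subset_convexHull ℝ _ ⟨hr.1, ne_of_apply_ne x hqr.ne'⟩) hpq hqr
    refine chordSlope_lt_of_chord_lt hpq hqr (hys ▸
      lt_of_mem_convexHull_sdiff hxy hP hc hd hcd hxc hxd hq.1 ?_ ?_ hq.2 hs hxs)
    · rintro rfl
      exact lt_asymm hpq (hxc p hp.1 (ne_of_apply_ne x hpq.ne))
    · rintro rfl
      exact lt_asymm hqr (hxd r hr.1 (ne_of_apply_ne x hqr.ne'))

lemma isChainPair_of_convexIndependent (hxy : Function.Injective (x.prod y))
    (hP : ConvexIndependent ℝ ((↑) : P → E)) (hc : c ∈ P) (hd : d ∈ P) (hcd : y c = y d)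
    (hxc : ∀ p ∈ P, p ≠ c → x c < x p) (hxd : ∀ p ∈ P, p ≠ d → x p < x d) :
    IsChainPair x y {p ∈ P | y c ≤ y p} {p ∈ P | y p < y c} where
  upper := isConcaveChain_of_convexIndependent hxy hP hc hd hcd hxc hxd
  lower := by
    have hxy' : Function.Injective (x.prod (-y)) := fun p q h =>
      hxy (Prod.ext (congrArg Prod.fst h :) (neg_injective (congrArg Prod.snd h :)))
    exact (isConcaveChain_of_convexIndependent hxy' hP hc hd (congrArg Neg.neg hcd) hxc hxd).mono
      fun p hp => ⟨hp.1, neg_le_neg hp.2.le⟩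
  lt _ hu _ hv := hv.2.trans_le hu.2

end ConvexPosition

section Plane

lemma exists_diametral_pair {E : Type*} [MetricSpace E] {P : Set E} (hP : P.Nontrivial)
    (hfin : P.Finite) : ∃ c ∈ P, ∃ d ∈ P, c ≠ d ∧ ∀ p ∈ P, ∀ q ∈ P, dist p q ≤ dist c d := by
  obtain ⟨p, hp, q, hq, hpq⟩ := hP
  obtain ⟨⟨c, d⟩, ⟨hc, hd⟩, hmax⟩ := Set.exists_max_image (P ×ˢ P) (fun e => dist e.1 e.2)
    (hfin.prod hfin) ⟨(p, q), hp, hq⟩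
  have hmax' : ∀ p ∈ P, ∀ q ∈ P, dist p q ≤ dist c d := fun p hp q hq => hmax (p, q) ⟨hp, hq⟩
  exact ⟨c, hc, d, hd, dist_pos.1 ((dist_pos.2 hpq).trans_le (hmax' p hp q hq)), hmax'⟩

variable {E : Type*} [NormedAddCommGroup E] [InnerProductSpace ℝ E]

lemma inner_sub_lt_inner_sub_of_dist_le {c d p : E} (hp : p ≠ c) (h : dist p d ≤ dist c d) :
    inner ℝ (d - c) c < inner ℝ (d - c) p := by
  have hpos : 0 < ‖p - c‖ ^ 2 := pow_pos (norm_pos_iff.2 (sub_ne_zero.2 hp)) 2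
  have hsq : ‖(d - c) - (p - c)‖ ^ 2 ≤ ‖d - c‖ ^ 2 := by
    rw [sub_sub_sub_cancel_right, ← dist_eq_norm, ← dist_eq_norm, dist_comm d p, dist_comm d c]
    gcongr
  rw [norm_sub_sq_real, inner_sub_right] at hsq
  linarith

variable [Fact (Module.finrank ℝ E = 2)] (o : Orientation ℝ E (Fin 2))

lemma injective_inner_prod_areaForm {a : E} (ha : a ≠ 0) :
    Function.Injective ((innerₗ E a).prod (o.areaForm a)) := by
  refine (injective_iff_map_eq_zero _).2 fun p hp => ?_
  have hinner : inner ℝ a p = 0 := congrArg Prod.fst hp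
  have harea : o.areaForm a p = 0 := congrArg Prod.snd hp
  have hsq := o.inner_sq_add_areaForm_sq a p
  rw [hinner, harea] at hsq
  simpa [ha] using hsq

lemma dotAt_inner_areaForm (a u v w : E) :
    dotAt (innerₗ E a) (o.areaForm a) u v w = ‖a‖ ^ 2 * inner ℝ (u - v) (w - v) := by
  rw [← o.inner_mul_inner_add_areaForm_mul_areaForm, dotAt, ← map_sub, ← map_sub, ← map_sub,
    ← map_sub]
  rfl

lemma exists_threshold_isChainPair {P : Set E} (hP : ConvexIndependent ℝ ((↑) : P → E))
    (hfin : P.Finite) :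
    ∃ a : E, a ≠ 0 ∧ ∃ t : ℝ, IsChainPair (innerₗ E a) (o.areaForm a)
      {p ∈ P | t ≤ o.areaForm a p} {p ∈ P | o.areaForm a p < t} := by
  rcases P.subsingleton_or_nontrivial with hsub | hnontrivial
  · have hdim : Module.finrank ℝ E = 2 := Fact.out
    have : Nontrivial E := Module.nontrivial_of_finrank_pos (R := ℝ) (hdim ▸ two_pos)
    obtain ⟨a, ha⟩ := exists_ne (0 : E)
    exact ⟨a, ha, 0, isConcaveChain_of_subsingleton (hsub.anti (Set.sep_subset _ _)),
      isConcaveChain_of_subsingleton (hsub.anti (Set.sep_subset _ _)),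
      fun _ hu _ hv => hv.2.trans_le hu.2⟩
  · obtain ⟨c, hc, d, hd, hne, hmax⟩ := exists_diametral_pair hnontrivial hfin
    have ha : d - c ≠ 0 := sub_ne_zero.2 hne.symm
    refine ⟨d - c, ha, o.areaForm (d - c) c, isChainPair_of_convexIndependent
      (injective_inner_prod_areaForm o ha) hP hc hd ?_ (fun p hp hpc =>
        inner_sub_lt_inner_sub_of_dist_le hpc (hmax p hp d hd)) fun p hp hpd => ?_⟩
    · rw [eq_comm, ← sub_eq_zero, ← map_sub, o.areaForm_apply_self]
    · have h := inner_sub_lt_inner_sub_of_dist_le hpd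
        ((hmax p hp c hc).trans_eq (dist_comm c d))
      rw [← neg_sub d c, inner_neg_left, inner_neg_left] at h
      exact neg_lt_neg_iff.1 h

lemma exists_partition_isChainPair {P : Finset E}
    (hP : ConvexIndependent ℝ ((↑) : ↥(P : Set E) → E)) :
    ∃ a : E, a ≠ 0 ∧ ∃ U V : Finset E, (U ∪ V : Set E) = P ∧ Disjoint U V ∧
      IsChainPair (innerₗ E a) (o.areaForm a) (U : Set E) V := by
  obtain ⟨a, ha, t, h⟩ := exists_threshold_isChainPair o hP P.finite_toSet
  refine ⟨a, ha, P.filter fun p => t ≤ o.areaForm a p, P.filter fun p => o.areaForm a p < t, ?_,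
    Finset.disjoint_filter.2 fun _ _ hle => hle.not_gt, ?_⟩
  · ext p
    simp only [Finset.coe_filter, Set.mem_union, Set.mem_ofPred_eq, ← and_or_left, le_or_gt,
      and_true, Finset.mem_coe]
  · simpa only [Finset.coe_filter, Finset.mem_coe] using h

end Plane

lemma inner_pos_of_angle_lt_pi_div_two {E : Type*} [NormedAddCommGroup E] [InnerProductSpace ℝ E]
    {u v : E} (h : InnerProductGeometry.angle u v < Real.pi / 2) : 0 < inner ℝ u v := by
  rw [InnerProductGeometry.angle, Real.arccos_lt_pi_div_two] at h
  exact pos_of_mul_pos_left h (inv_nonneg.2 (by positivity))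

lemma ConvexPosition.convexIndependent {P : Set (EuclideanSpace ℝ (Fin 2))}
    (hP : ConvexPosition P) : ConvexIndependent ℝ ((↑) : P → EuclideanSpace ℝ (Fin 2)) :=
  (convex_convexHull ℝ P).convexIndependent_extremePoints.mono hP

lemma IsLGG.isAcuteGraph [Fact (Module.finrank ℝ (EuclideanSpace ℝ (Fin 2)) = 2)]
    (o : Orientation ℝ (EuclideanSpace ℝ (Fin 2)) (Fin 2)) {P : Set (EuclideanSpace ℝ (Fin 2))}
    {F : Set (EuclideanSpace ℝ (Fin 2) × EuclideanSpace ℝ (Fin 2))} (hF : IsLGG P F)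
    {a : EuclideanSpace ℝ (Fin 2)} (ha : a ≠ 0) :
    IsAcuteGraph (innerₗ _ a) (o.areaForm a) F where
  symm := hF.2.1
  dotAt_pos u v w huv huw hvw := by
    rw [dotAt_inner_areaForm]
    exact mul_pos (pow_pos (norm_pos_iff.2 ha) 2)
      (inner_pos_of_angle_lt_pi_div_two (hF.2.2 u v w huv huw hvw).1)

/-- There is an absolute constant `C` such that every locally Gabriel graph `(P, F)` on a
set of `n` points in convex position in the plane admits a partition `P = U ∪ V`, linear
orders on `U` and `V`, and a partition of the edges into `E₁ ∪ E₂ ∪ E₀` with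
`E₁, E₂ ⊆ U × V` and `|E₀| ≤ C·n`, such that `(U, V, E₁)` with the given orders and
`(U, V, E₂)` with both orders reversed each satisfy the path restricted property. -/
theorem lgg_decomposes_into_two_prbgs :
    ∃ C : ℝ, ∀ (P : Finset (EuclideanSpace ℝ (Fin 2)))
      (F : Set (EuclideanSpace ℝ (Fin 2) × EuclideanSpace ℝ (Fin 2))),
      ConvexPosition (P : Set (EuclideanSpace ℝ (Fin 2))) →
      IsLGG (P : Set (EuclideanSpace ℝ (Fin 2))) F →
      ∃ (U V : Finset (EuclideanSpace ℝ (Fin 2))),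
        (U : Set (EuclideanSpace ℝ (Fin 2))) ∪ (V : Set (EuclideanSpace ℝ (Fin 2))) =
            (P : Set (EuclideanSpace ℝ (Fin 2))) ∧
        Disjoint U V ∧
        ∃ (iU : LinearOrder ↥U) (iV : LinearOrder ↥V)
          (E₁ E₂ : Set (↥U × ↥V))
          (E₀ : Set (EuclideanSpace ℝ (Fin 2) × EuclideanSpace ℝ (Fin 2))),
          Disjoint E₁ E₂ ∧ E₀ ⊆ F ∧
          (∀ e : ↥U × ↥V, e ∈ E₁ ∪ E₂ →
            ((e.1 : EuclideanSpace ℝ (Fin 2)), (e.2 : EuclideanSpace ℝ (Fin 2))) ∈ F) ∧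
          (∀ a b : EuclideanSpace ℝ (Fin 2), (a, b) ∈ F →
            (a, b) ∈ E₀ ∨ (b, a) ∈ E₀ ∨
            ∃ e : ↥U × ↥V, (e ∈ E₁ ∨ e ∈ E₂) ∧
              (((e.1 : EuclideanSpace ℝ (Fin 2)) = a ∧
                  (e.2 : EuclideanSpace ℝ (Fin 2)) = b) ∨
                ((e.1 : EuclideanSpace ℝ (Fin 2)) = b ∧
                  (e.2 : EuclideanSpace ℝ (Fin 2)) = a))) ∧
          (E₀.ncard : ℝ) ≤ C * P.card ∧
          @IsPRBG ↥U ↥V iU.toPreorder iV.toPreorder E₁ ∧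
          @IsPRBG ↥U ↥V (revPreorder iU.toPreorder) (revPreorder iV.toPreorder) E₂ := by
  refine ⟨3, fun P F hP hF => ?_⟩
  have : Fact (Module.finrank ℝ (EuclideanSpace ℝ (Fin 2)) = 2) := ⟨by simp⟩
  let o := (EuclideanSpace.basisFun (Fin 2) ℝ).toBasis.orientation
  obtain ⟨a, ha, U, V, hunion, hdisj, h⟩ := exists_partition_isChainPair o hP.convexIndependent
  have hacute := hF.isAcuteGraph o ha
  refine ⟨U, V, hunion, hdisj, h.upper.leftToRight, h.lower.leftToRight,
    leftEdges (innerₗ _ a) (o.areaForm a) F U V, rightEdges (innerₗ _ a) (o.areaForm a) F U V,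
    residualEdges (innerₗ _ a) (o.areaForm a) F U V,
    Set.disjoint_left.2 fun _ hleft hright => hright.2.2 hleft.2.1, residualEdges_subset _ _,
    fun _ he => he.elim And.left And.left, fun p q hpq => ?_, ?_,
    h.isPRBG_leftEdges hacute, h.isPRBG_rightEdges hacute⟩
  · obtain ⟨hp, hq, hne⟩ := hF.1 _ hpq
    exact h.edge_cover hacute (hunion ▸ hp) (hunion ▸ hq) hpq hne
  · have hcard := h.ncard_residualEdges_le hacute U.finite_toSet V.finite_toSet
    rw [← Set.ncard_union_eq (Finset.disjoint_coe.2 hdisj), hunion, Set.ncard_coe_finset] at hcard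
    exact_mod_cast hcard
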